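/- Let E be an open real interval. A function F : Eⁿ → E is a symmetric, nondecreasing, order invariant function if and only if there exists k ∈ [n] such that F(x) = x_{(k)}, the k-th order statistic, for all x ∈ Eⁿ. -/

import Mathlib

/-- The `k`-th order statistic. -/
def orderStat {α : Type*} [LinearOrder α] {n : ℕ} (x : Fin n → α) (k : Fin n) : α :=
  x (Tuple.sort x k)

/-!
Order automorphisms can be glued at a point where they agree. On an order without endpoints in which
every pair `a < b` can be moved to every pair `c < d`, this produces automorphisms that fix any
given finite set and move any given point outside it, so an order invariant `F` can only return one
of its arguments. On tuples with two values `a < b`, the first `j` entries being `a`, the choice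
between `a` and `b` then depends only on `j`, and it switches from `b` to `a` between some `j = k`
and `j = k + 1`. A sorted tuple with `k`-th entry `t` is squeezed between the tuple with `k` entries
far below and the rest equal to `t`, and the tuple with `k + 1` entries equal to `t` and the rest
far above; `F` equals `t` at both.
-/

open Set Function

section DoublyHomogeneous

variable {α : Type*} [LinearOrder α]

theorem exists_orderIso_glue {β : Type*} [LinearOrder β] (f g : α ≃o β) {a : α}
    (hfg : f a = g a) : ∃ e : α ≃o β, EqOn e f (Iic a) ∧ EqOn e g (Ici a) := by
  let e : α → β := fun x => if x ≤ a then f x else g x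
  have e_left : EqOn e f (Iic a) := fun x hx => if_pos hx
  have e_right : EqOn e g (Ici a) := fun x hx => by
    rcases (mem_Ici.1 hx).eq_or_lt with rfl | hlt
    · exact (e_left self_mem_Iic).trans hfg
    · exact if_neg hlt.not_ge
  have e_strictMono : StrictMono e :=
    ((f.strictMono.strictMonoOn _).congr e_left.symm).Iic_union_Ici
      ((g.strictMono.strictMonoOn _).congr e_right.symm)
  have e_surjective : Surjective e := fun y => by
    rcases le_total y (f a) with hy | hy
    · exact ⟨f.symm y, (e_left (f.symm_apply_le.2 hy)).trans (f.apply_symm_apply y)⟩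
    · exact ⟨g.symm y, (e_right (g.le_symm_apply.2 (hfg ▸ hy))).trans (g.apply_symm_apply y)⟩
  exact ⟨e_strictMono.orderIsoOfSurjective e e_surjective, e_left, e_right⟩

/-- A linear order is doubly homogeneous if its automorphism group is transitive on the strictly
increasing pairs. It is the property of open intervals on which the whole argument rests. -/
def IsDoublyHomogeneous (α : Type*) [Preorder α] : Prop :=
  ∀ ⦃a b c d : α⦄, a < b → c < d → ∃ φ : α ≃o α, φ a = c ∧ φ b = d

theorem isDoublyHomogeneous_of_field (K : Type*) [Field K] [LinearOrder K]
    [IsStrictOrderedRing K] : IsDoublyHomogeneous K := by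
  intro a b c d hab hcd
  have slope_pos : 0 < (d - c) / (b - a) := div_pos (sub_pos.2 hcd) (sub_pos.2 hab)
  refine ⟨((OrderIso.subRight a).trans (OrderIso.mulRight₀ _ slope_pos)).trans
    (OrderIso.addRight c), ?_, ?_⟩
  · simp
  · simp [mul_div_cancel₀ _ (sub_pos.2 hab).ne']

namespace IsDoublyHomogeneous

theorem exists_orderIso_eqOn_Icc (h : IsDoublyHomogeneous α) (f : α ≃o α) {p a b q : α}
    (hpa : p < a) (hab : a ≤ b) (hbq : b < q) (hpfa : p < f a) (hfbq : f b < q) :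
    ∃ e : α ≃o α, EqOn e f (Icc a b) ∧ EqOn e id (Ioo p q)ᶜ := by
  obtain ⟨l, l_p, l_a⟩ := h hpa hpfa
  obtain ⟨r, r_b, r_q⟩ := h hbq hfbq
  obtain ⟨e₁, e₁_left, e₁_right⟩ := exists_orderIso_glue (OrderIso.refl α) l (a := p) l_p.symm
  obtain ⟨e₂, e₂_left, e₂_right⟩ :=
    exists_orderIso_glue e₁ f ((e₁_right hpa.le).trans l_a)
  obtain ⟨e₃, e₃_left, e₃_right⟩ :=
    exists_orderIso_glue e₂ r ((e₂_right hab).trans r_b.symm)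
  obtain ⟨e, e_left, e_right⟩ :=
    exists_orderIso_glue e₃ (OrderIso.refl α) ((e₃_right hbq.le).trans r_q)
  have e_eq_e₂ : EqOn e e₂ (Iic b) := fun x hx =>
    (e_left (hx.trans hbq.le)).trans (e₃_left hx)
  refine ⟨e, fun x hx => (e_eq_e₂ hx.2).trans (e₂_right hx.1), fun x hx => ?_⟩
  rcases le_or_gt x p with hxp | hpx
  · have hxa : x ≤ a := hxp.trans hpa.le
    exact (e_eq_e₂ (hxa.trans hab)).trans ((e₂_left hxa).trans (e₁_left hxp))
  · exact e_right (not_lt.1 fun hxq => hx ⟨hpx, hxq⟩)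

theorem subtype (h : IsDoublyHomogeneous α) (s : Set α) [s.OrdConnected] [NoMinOrder s]
    [NoMaxOrder s] : IsDoublyHomogeneous s := by
  intro a b c d hab hcd
  obtain ⟨f, f_a, f_b⟩ := h hab hcd
  obtain ⟨p, hp⟩ := exists_lt (min a c)
  obtain ⟨q, hq⟩ := exists_gt (max b d)
  obtain ⟨hpa, hpc⟩ := lt_min_iff.1 hp
  obtain ⟨hbq, hdq⟩ := max_lt_iff.1 hq
  obtain ⟨e, e_eq_f, e_eq_id⟩ := h.exists_orderIso_eqOn_Icc f (p := p) (q := q) hpa hab.le hbq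
    (f_a.symm ▸ hpc) (f_b.symm ▸ hdq)
  have Ioo_subset : Ioo (p : α) q ⊆ s := Ioo_subset_Icc_self.trans (Set.Icc_subset s p.2 q.2)
  have e_p : e p = p := e_eq_id fun hx => hx.1.false
  have e_q : e q = q := e_eq_id fun hx => hx.2.false
  have mem_iff : ∀ x, x ∈ s ↔ e x ∈ s := fun x => by
    by_cases hx : x ∈ Ioo (p : α) q
    · have hex : e x ∈ Ioo (p : α) q := by
        rw [← e_p, ← e_q]
        exact ⟨e.strictMono hx.1, e.strictMono hx.2⟩
      exact iff_of_true (Ioo_subset hx) (Ioo_subset hex)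
    · rw [e_eq_id hx, id]
  refine ⟨⟨e.toEquiv.subtypeEquiv mem_iff, e.le_iff_le⟩, Subtype.ext ?_, Subtype.ext ?_⟩
  · exact (e_eq_f (left_mem_Icc.2 hab.le)).trans f_a
  · exact (e_eq_f (right_mem_Icc.2 hab.le)).trans f_b

theorem denselyOrdered [NoMaxOrder α] (h : IsDoublyHomogeneous α) : DenselyOrdered α where
  dense a b hab := by
    obtain ⟨c, hbc⟩ := exists_gt b
    obtain ⟨φ, φ_a, φ_c⟩ := h (hab.trans hbc) hab
    exact ⟨φ b, φ_a.symm.trans_lt (φ.strictMono hab), (φ.strictMono hbc).trans_eq φ_c⟩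

theorem exists_orderIso_apply_ne [NoMinOrder α] [NoMaxOrder α] (h : IsDoublyHomogeneous α)
    {s : Set α} (hs : s.Finite) {y : α} (hy : y ∉ s) :
    ∃ φ : α ≃o α, EqOn φ id s ∧ φ y ≠ y := by
  let _ := Preorder.topology α
  have : OrderTopology α := ⟨rfl⟩
  have := h.denselyOrdered
  obtain ⟨p, q, ⟨hpy, hyq⟩, hpq⟩ :=
    mem_nhds_iff_exists_Ioo_subset.1 (hs.isClosed.isOpen_compl.mem_nhds hy)
  obtain ⟨z, hyz, hzq⟩ := exists_between hyq
  obtain ⟨f, -, f_y⟩ := h hpy (hpy.trans hyz)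
  obtain ⟨φ, φ_eq_f, φ_eq_id⟩ := h.exists_orderIso_eqOn_Icc f hpy le_rfl hyq
    (f_y ▸ hpy.trans hyz) (f_y ▸ hzq)
  refine ⟨φ, φ_eq_id.mono (subset_compl_comm.1 hpq), ?_⟩
  rw [φ_eq_f (left_mem_Icc.2 le_rfl), f_y]
  exact hyz.ne'

end IsDoublyHomogeneous

end DoublyHomogeneous

section OpenSubset

variable {α : Type*} [LinearOrder α] [TopologicalSpace α] [OrderTopology α] [DenselyOrdered α]
  {s : Set α}

theorem noMinOrder_of_isOpen [NoMinOrder α] (hs : IsOpen s) : NoMinOrder s where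
  exists_lt x := by
    obtain ⟨l, hlx, hl⟩ := exists_Ioc_subset_of_mem_nhds (hs.mem_nhds x.2) (exists_lt (x : α))
    obtain ⟨z, hlz, hzx⟩ := exists_between hlx
    exact ⟨⟨z, hl ⟨hlz, hzx.le⟩⟩, hzx⟩

theorem noMaxOrder_of_isOpen [NoMaxOrder α] (hs : IsOpen s) : NoMaxOrder s where
  exists_gt x := by
    obtain ⟨u, hxu, hu⟩ := exists_Ico_subset_of_mem_nhds (hs.mem_nhds x.2) (exists_gt (x : α))
    obtain ⟨z, hxz, hzu⟩ := exists_between hxu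
    exact ⟨⟨z, hu ⟨hxz.le, hzu⟩⟩, hxz⟩

end OpenSubset

section OrderStat

variable {α β : Type*} [LinearOrder α] [LinearOrder β] {n : ℕ}

theorem orderStat_comp_perm (x : Fin n → α) (σ : Equiv.Perm (Fin n)) :
    orderStat (x ∘ σ) = orderStat x :=
  Tuple.comp_perm_comp_sort_eq_comp_sort

theorem orderStat_comp_of_monotone {f : α → β} (hf : Monotone f) (x : Fin n → α) :
    orderStat (f ∘ x) = f ∘ orderStat x :=
  (Tuple.comp_sort_eq_comp_iff_monotone.2 (hf.comp (Tuple.monotone_sort x))).symm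

theorem orderStat_le_iff {x : Fin n → α} {k : Fin n} {a : α} :
    orderStat x k ≤ a ↔ (k : ℕ) < Finset.card {i | x i ≤ a} := by
  have card_eq : Finset.card {i | (x ∘ Tuple.sort x) i ≤ a} = Finset.card {i | x i ≤ a} :=
    Finset.card_equiv (Tuple.sort x) (by simp)
  rw [← card_eq, Tuple.lt_card_le_iff_apply_le_of_monotone (Tuple.monotone_sort x)]
  rfl

theorem orderStat_mono (k : Fin n) : Monotone fun x : Fin n → α => orderStat x k := by
  intro x y hxy
  have count_y : (k : ℕ) < Finset.card {i | y i ≤ orderStat y k} := orderStat_le_iff.1 le_rfl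
  exact orderStat_le_iff.2 (count_y.trans_le (Finset.card_le_card
    (Finset.monotone_filter_right _ fun i _ => (hxy i).trans)))

end OrderStat

/-- Order invariance of an operation on tuples: it commutes with every increasing bijection of `α`
onto itself, encoded as an order automorphism. -/
def IsOrderInvariant {ι α : Type*} [Preorder α] (F : (ι → α) → α) : Prop :=
  ∀ (φ : α ≃o α) (x : ι → α), F (φ ∘ x) = φ (F x)

theorem isOrderInvariant_iff_strictMono_bijective {ι α : Type*} [LinearOrder α]
    {F : (ι → α) → α} :
    IsOrderInvariant F ↔ ∀ φ : α → α, StrictMono φ → Bijective φ →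
      ∀ x : ι → α, F (fun i => φ (x i)) = φ (F x) :=
  ⟨fun hF φ hφ hφ' => hF (hφ.orderIsoOfSurjective φ hφ'.surjective),
    fun hF φ => hF φ φ.strictMono φ.bijective⟩

/-- The two-valued `n`-tuple `(a, …, a, b, …, b)` with `j` leading entries `a`, all of them if
`n ≤ j`. -/
def stepTuple {α : Type*} (n j : ℕ) (a b : α) : Fin n → α :=
  fun i => if (i : ℕ) < j then a else b

theorem comp_stepTuple {α β : Type*} (f : α → β) (n j : ℕ) (a b : α) :
    f ∘ stepTuple n j a b = stepTuple n j (f a) (f b) :=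
  funext fun _ => apply_ite f _ _ _

namespace IsOrderInvariant

variable {α : Type*} [LinearOrder α] [NoMinOrder α] [NoMaxOrder α]

theorem mem_range {ι : Type*} [Finite ι] {F : (ι → α) → α} (hF : IsOrderInvariant F)
    (h : IsDoublyHomogeneous α) (x : ι → α) : F x ∈ range x := by
  by_contra hx
  obtain ⟨φ, φ_eq_id, φ_ne⟩ := h.exists_orderIso_apply_ne (finite_range x) hx
  have φ_comp : φ ∘ x = x := funext fun i => φ_eq_id (mem_range_self i)
  exact φ_ne (by rw [← hF φ x, φ_comp])

variable {n : ℕ} {F : (Fin n → α) → α}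

theorem map_stepTuple_eq_left_or_right (hF : IsOrderInvariant F) (h : IsDoublyHomogeneous α)
    (j : ℕ) (a b : α) : F (stepTuple n j a b) = a ∨ F (stepTuple n j a b) = b := by
  obtain ⟨i, hi⟩ := hF.mem_range h (stepTuple n j a b)
  rw [← hi]
  exact ite_eq_or_eq _ a b

theorem exists_stepTuple_threshold [Nonempty α] (hF : IsOrderInvariant F)
    (h : IsDoublyHomogeneous α) : ∃ k : Fin n, ∀ a b : α, a < b →
      F (stepTuple n k a b) = b ∧ F (stepTuple n (k + 1) a b) = a := by
  obtain ⟨a₀⟩ := ‹Nonempty α›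
  obtain ⟨b₀, hab₀⟩ := exists_gt a₀
  have map_zero : F (stepTuple n 0 a₀ b₀) ≠ a₀ := by
    obtain ⟨i, hi⟩ := hF.mem_range h (stepTuple n 0 a₀ b₀)
    exact hi ▸ hab₀.ne'
  have map_of_le : ∀ j, n ≤ j → F (stepTuple n j a₀ b₀) = a₀ := fun j hj => by
    obtain ⟨i, hi⟩ := hF.mem_range h (stepTuple n j a₀ b₀)
    exact hi ▸ if_pos (i.2.trans_le hj)
  obtain ⟨k, hk, hk_succ⟩ := Nat.exists_not_and_succ_of_not_zero_of_exists
    (p := fun j => F (stepTuple n j a₀ b₀) = a₀) map_zero ⟨n, map_of_le n le_rfl⟩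
  refine ⟨⟨k, not_le.1 (hk ∘ map_of_le k)⟩, fun a b hab => ?_⟩
  obtain ⟨φ, rfl, rfl⟩ := h hab₀ hab
  simp only [← comp_stepTuple, hF φ, φ.injective.eq_iff]
  exact ⟨(hF.map_stepTuple_eq_left_or_right h k a₀ b₀).resolve_left hk, hk_succ⟩

end IsOrderInvariant

theorem apply_eq_of_stepTuple_threshold {α : Type*} [LinearOrder α] [NoMinOrder α]
    [NoMaxOrder α] {n : ℕ} {F : (Fin n → α) → α} (hF : Monotone F) {k : Fin n}
    (hk : ∀ a b : α, a < b →
      F (stepTuple n k a b) = b ∧ F (stepTuple n (k + 1) a b) = a)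
    {x : Fin n → α} (hx : Monotone x) : F x = x k := by
  have : Nonempty α := ⟨x k⟩
  obtain ⟨l, hl⟩ := (finite_range x).bddBelow
  obtain ⟨u, hu⟩ := (finite_range x).bddAbove
  obtain ⟨a, hal⟩ := exists_lt l
  obtain ⟨b, hub⟩ := exists_gt u
  have a_lt : ∀ i, a < x i := fun i => hal.trans_le (hl (mem_range_self i))
  have lt_b : ∀ i, x i < b := fun i => (hu (mem_range_self i)).trans_lt hub
  have le_x : stepTuple n k a (x k) ≤ x := fun i => by
    rw [stepTuple]
    split_ifs with hi
    exacts [(a_lt i).le, hx (Fin.le_def.2 (not_lt.1 hi))]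
  have x_le : x ≤ stepTuple n (k + 1) (x k) b := fun i => by
    rw [stepTuple]
    split_ifs with hi
    exacts [hx (Fin.le_def.2 (Nat.lt_succ_iff.1 hi)), (lt_b i).le]
  exact le_antisymm ((hF x_le).trans_eq (hk _ _ (lt_b k)).2)
    ((hk _ _ (a_lt k)).1.symm.trans_le (hF le_x))

theorem symmetric_nondecreasing_orderInvariant_iff_orderStat_general {α : Type*} [LinearOrder α]
    [Nonempty α] [NoMinOrder α] [NoMaxOrder α] (h : IsDoublyHomogeneous α) {n : ℕ}
    (F : (Fin n → α) → α) :
    ((∀ (σ : Equiv.Perm (Fin n)) (x : Fin n → α), F (x ∘ σ) = F x) ∧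
      Monotone F ∧ IsOrderInvariant F) ↔
    ∃ k : Fin n, ∀ x : Fin n → α, F x = orderStat x k := by
  constructor
  · rintro ⟨hsymm, hmono, hinv⟩
    obtain ⟨k, hk⟩ := hinv.exists_stepTuple_threshold h
    refine ⟨k, fun x => ?_⟩
    rw [← hsymm (Tuple.sort x) x]
    exact apply_eq_of_stepTuple_threshold hmono hk (Tuple.monotone_sort x)
  · rintro ⟨k, hk⟩
    obtain rfl : F = fun x => orderStat x k := funext hk
    exact ⟨fun σ x => congrFun (orderStat_comp_perm x σ) k, orderStat_mono k,
      fun φ x => congrFun (orderStat_comp_of_monotone φ.monotone x) k⟩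

/-- On an open real interval `E`, the symmetric nondecreasing order invariant functions
`F : Eⁿ → E` are exactly the order statistics. -/
theorem symmetric_nondecreasing_orderInvariant_iff_orderStat (n : ℕ) (E : Set ℝ)
    (hne : E.Nonempty) (hopen : IsOpen E) (hE : E.OrdConnected)
    (F : (Fin n → E) → E) :
    ((∀ (σ : Equiv.Perm (Fin n)) (x : Fin n → E), F (x ∘ σ) = F x) ∧
      Monotone F ∧
      ∀ φ : E → E, StrictMono φ → Function.Bijective φ →
        ∀ x : Fin n → E, F (fun i => φ (x i)) = φ (F x)) ↔
    ∃ k : Fin n, ∀ x : Fin n → E, F x = orderStat x k := by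
  have := hne.to_subtype
  have := noMinOrder_of_isOpen hopen
  have := noMaxOrder_of_isOpen hopen
  rw [← isOrderInvariant_iff_strictMono_bijective]
  exact symmetric_nondecreasing_orderInvariant_iff_orderStat_general
    ((isDoublyHomogeneous_of_field ℝ).subtype E) F
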